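/- For every nonnegative integer n and complex number x with 6x-1 != 0 and 3x-1 != 0: sum over k from 0 to n of ((3x)_k (1-3x)_k (-n)_k)/(k! (3/2)_k (-1-3n)_k) * (3/4)^k equals (3x/(6x-1)) * ((1+x)_n (1-x)_n)/((2/3)_n (4/3)_n) + ((3x-1)/(6x-1)) * ((2/3+x)_n (4/3-x)_n)/((2/3)_n (4/3)_n). -/

import Mathlib

/-- Pochhammer symbol (rising factorial) `(a)_k`. -/
noncomputable def poch (a : ℂ) (k : ℕ) : ℂ := ∏ j ∈ Finset.range k, (a + j)

/-!
Gosper's strange evaluation reads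
`∑ₖ (1+3y)_k (1-3y)_k (-n)_k / (k! (3/2)_k (-1-3n)_k) (3/4)^k
  = (1+y)_n (1-y)_n / ((2/3)_n (4/3)_n)`.
Creative telescoping gives a first order recurrence in `n` for its left-hand side, which the
right-hand side visibly satisfies. Replacing `1 + 3y` by `3x` and keeping `1 - 3x` yields a sum
that is no longer of this shape, but a contiguous relation writes its summand as a combination of
Gosper's summands at `y = x` and `y = x - 1/3`, with coefficients that do not depend on `k`.
-/

/-- The Pochhammer symbol `(a)_k` over any semiring: a value of the polynomial `ascPochhammer`. -/
local notation "⦅" a "⦆_" k:max => Polynomial.eval a (ascPochhammer _ k)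

section CommSemiring

variable {R : Type*} [CommSemiring R]

theorem ascPochhammer_eval_eq_prod_range (a : R) (k : ℕ) :
    ⦅a⦆_k = ∏ j ∈ Finset.range k, (a + j) := by
  induction k with
  | zero => simp
  | succ k ih => rw [ascPochhammer_succ_eval, ih, Finset.prod_range_succ]

theorem ascPochhammer_eval_succ_left (a : R) (k : ℕ) :
    ⦅a⦆_(k + 1) = a * ⦅a + 1⦆_k := by
  simp [ascPochhammer_succ_left, Polynomial.eval_comp]

theorem mul_ascPochhammer_eval_add_one (a : R) (k : ℕ) :
    a * ⦅a + 1⦆_k = ⦅a⦆_k * (a + k) := by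
  rw [← ascPochhammer_eval_succ_left, ascPochhammer_succ_eval]

theorem ascPochhammer_eval_succ_mul_eq_mul_eval_add_three (a : R) (k : ℕ) :
    ⦅a⦆_(k + 1) * ((a + k + 1) * (a + k + 2)) = a * (a + 1) * (a + 2) * ⦅a + 3⦆_k :=
  calc
    ⦅a⦆_(k + 1) * ((a + k + 1) * (a + k + 2)) = ⦅a⦆_(k + 1 + 1 + 1) := by
      rw [ascPochhammer_succ_eval (k + 1 + 1), ascPochhammer_succ_eval (k + 1)]
      push_cast
      ring
    _ = a * (a + 1) * (a + 2) * ⦅a + 3⦆_k := by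
      rw [ascPochhammer_eval_succ_left, ascPochhammer_eval_succ_left,
        ascPochhammer_eval_succ_left, show a + 1 + 1 + 1 = a + 3 by ring]
      ring

end CommSemiring

section CommRing

variable {R : Type*} [CommRing R]

theorem ascPochhammer_eval_one_add_mul_one_sub_succ (a : R) (k : ℕ) :
    ⦅1 + a⦆_(k + 1) * ⦅1 - a⦆_(k + 1) =
      ((k + 1) ^ 2 - a ^ 2) * (⦅1 + a⦆_k * ⦅1 - a⦆_k) := by
  simp only [ascPochhammer_succ_eval]
  ring

theorem ascPochhammer_eval_mul_one_sub_contiguous (a : R) (k : ℕ) :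
    (2 * a - 1) * (⦅a⦆_k * ⦅1 - a⦆_k) =
      a * (⦅1 + a⦆_k * ⦅1 - a⦆_k) + (a - 1) * (⦅a⦆_k * ⦅2 - a⦆_k) := by
  have raise_left : a * ⦅1 + a⦆_k = ⦅a⦆_k * (a + k) := by
    rw [add_comm 1 a, mul_ascPochhammer_eval_add_one]
  have raise_right : (1 - a) * ⦅2 - a⦆_k = ⦅1 - a⦆_k * (1 - a + k) := by
    rw [← mul_ascPochhammer_eval_add_one, show 1 - a + 1 = 2 - a by ring]
  linear_combination ⦅a⦆_k * raise_right - ⦅1 - a⦆_k * raise_left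

end CommRing

section Field

variable {K : Type*} [Field K]

/-- The factor `(1+3y)_k (1-3y)_k / (k! (3/2)_k) (3/4)^k` of the summand of Gosper's strange sum,
which does not involve the length of the sum. -/
noncomputable def gosperCoeff (y : K) (k : ℕ) : K :=
  (⦅1 + 3 * y⦆_k * ⦅1 - 3 * y⦆_k) / ((k.factorial : K) * ⦅3 / 2⦆_k) * (3 / 4) ^ k

/-- The factor `(-n)_k / (-1-3n)_k` of the summand of Gosper's strange sum, which carries its
dependence on the length of the sum. -/
noncomputable def gosperWeight (K : Type*) [Field K] (n k : ℕ) : K :=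
  ⦅-(n : K)⦆_k / ⦅-1 - 3 * (n : K)⦆_k

/-- The summand `(1+3y)_k (1-3y)_k (-n)_k / (k! (3/2)_k (-1-3n)_k) (3/4)^k` of Gosper's strange
sum. -/
noncomputable def gosperTerm (y : K) (n k : ℕ) : K :=
  gosperCoeff y k * gosperWeight K n k

theorem gosperTerm_zero_right (y : K) (n : ℕ) : gosperTerm y n 0 = 1 := by
  simp [gosperTerm, gosperCoeff, gosperWeight]

theorem gosperWeight_eq_zero_of_lt {n k : ℕ} (h : n < k) : gosperWeight K n k = 0 := by
  rw [gosperWeight, (ascPochhammer_eval_eq_zero_iff k _).2 ⟨n, h, (neg_neg _).symm⟩, zero_div]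

variable [CharZero K]

theorem gosperCoeff_succ (y : K) (k : ℕ) :
    2 * (k + 1) * (2 * k + 3) * gosperCoeff y (k + 1) =
      3 * ((k + 1) ^ 2 - 9 * y ^ 2) * gosperCoeff y k := by
  have hk : ((k + 1) * (3 / 2 + k) : K) ≠ 0 := by
    have : ((k + 1) * (2 * k + 3) : K) ≠ 0 :=
      mod_cast (by positivity : (k + 1) * (2 * k + 3) ≠ 0)
    contrapose! this
    linear_combination 2 * this
  have denominator : ((k + 1).factorial : K) * ⦅3 / 2⦆_(k + 1) =
      (k + 1) * (3 / 2 + k) * ((k.factorial : K) * ⦅3 / 2⦆_k) := by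
    rw [ascPochhammer_succ_eval, Nat.factorial_succ, Nat.cast_mul, Nat.cast_succ]
    ring
  rw [gosperCoeff, ascPochhammer_eval_one_add_mul_one_sub_succ, denominator, mul_div_mul_comm,
    gosperCoeff, pow_succ]
  generalize (⦅1 + 3 * y⦆_k * ⦅1 - 3 * y⦆_k) / ((k.factorial : K) * ⦅3 / 2⦆_k) = c
  linear_combination 3 * c * (3 / 4) ^ k * mul_div_cancel₀ ((k + 1) ^ 2 - (3 * y) ^ 2) hk

theorem gosperWeight_succ_right {n k : ℕ} (h : k ≤ n) :
    (3 * n + 1 - k) * gosperWeight K n (k + 1) = (n - k) * gosperWeight K n k := by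
  have hk : (3 * n + 1 - k : K) ≠ 0 := sub_ne_zero.2 (mod_cast (by omega))
  rw [gosperWeight, ascPochhammer_succ_eval, ascPochhammer_succ_eval, mul_div_mul_comm,
    ← gosperWeight, ← neg_div_neg_eq (-n + k : K), show -(-n + k : K) = n - k by ring,
    show -(-1 - 3 * n + k : K) = 3 * n + 1 - k by ring, mul_left_comm, mul_div_cancel₀ _ hk,
    mul_comm]

theorem gosperWeight_succ_succ {n k : ℕ} (h : k ≤ n) :
    3 * ((3 * n + 2) * (3 * n + 4)) * gosperWeight K (n + 1) (k + 1) =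
      (3 * n + 2 - k) * (3 * n + 3 - k) * gosperWeight K n k := by
  have hn : (3 * ((3 * n + 2) * (3 * n + 4)) : K) ≠ 0 :=
    mod_cast (by positivity : 3 * ((3 * n + 2) * (3 * n + 4)) ≠ 0)
  have hn' : (-(n + 1) : K) ≠ 0 := neg_ne_zero.2 n.cast_add_one_ne_zero
  have hk : ((3 * n + 2 - k) * (3 * n + 3 - k) : K) ≠ 0 :=
    mul_ne_zero (sub_ne_zero.2 (mod_cast (by omega))) (sub_ne_zero.2 (mod_cast (by omega)))
  have numerator : ⦅-((n + 1 : ℕ) : K)⦆_(k + 1) = -(n + 1) * ⦅-(n : K)⦆_k := by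
    rw [ascPochhammer_eval_succ_left, Nat.cast_succ, neg_add_rev, neg_add_cancel_comm]
  have denominator : ⦅-1 - 3 * ((n + 1 : ℕ) : K)⦆_(k + 1) * ((3 * n + 2 - k) * (3 * n + 3 - k)) =
      -(n + 1) * (3 * ((3 * n + 2) * (3 * n + 4)) * ⦅-1 - 3 * (n : K)⦆_k) := by
    have shift := ascPochhammer_eval_succ_mul_eq_mul_eval_add_three
      (-1 - 3 * ((n + 1 : ℕ) : K)) k
    rw [show -1 - 3 * ((n + 1 : ℕ) : K) + 3 = -1 - 3 * n by push_cast; ring] at shift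
    push_cast at shift ⊢
    linear_combination shift
  rw [gosperWeight, ← mul_div_mul_right _ _ hk, numerator, denominator, mul_assoc (-(n + 1 : K)),
    mul_div_mul_left _ _ hn', mul_comm (⦅-(n : K)⦆_k), mul_div_mul_comm, ← gosperWeight,
    ← mul_assoc, mul_div_cancel₀ _ hn]

theorem gosperTerm_succ_right (y : K) {n k : ℕ} (h : k ≤ n) :
    2 * (k + 1) * (2 * k + 3) * (3 * n + 1 - k) * gosperTerm y n (k + 1) =
      3 * ((k + 1) ^ 2 - 9 * y ^ 2) * (n - k) * gosperTerm y n k := by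
  rw [gosperTerm, mul_mul_mul_comm, gosperCoeff_succ, gosperWeight_succ_right h, gosperTerm,
    mul_mul_mul_comm]

theorem gosperTerm_succ_succ (y : K) {n k : ℕ} (h : k ≤ n) :
    2 * (k + 1) * (2 * k + 3) * ((3 * n + 2) * (3 * n + 4)) * gosperTerm y (n + 1) (k + 1) =
      ((k + 1) ^ 2 - 9 * y ^ 2) * ((3 * n + 2 - k) * (3 * n + 3 - k)) * gosperTerm y n k := by
  rw [gosperTerm, mul_mul_mul_comm, gosperCoeff_succ, gosperTerm]
  linear_combination ((k + 1) ^ 2 - 9 * y ^ 2) * gosperCoeff y k * gosperWeight_succ_succ (K := K) h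

theorem sum_gosperTerm_telescope (y : K) {n m : ℕ} (h : m ≤ n + 1) :
    ∑ k ∈ Finset.range (m + 1), ((3 * n + 2) * (3 * n + 4) * gosperTerm y (n + 1) k -
        9 * ((n + 1) ^ 2 - y ^ 2) * gosperTerm y n k) =
      -((m + 1) ^ 2 - 9 * y ^ 2) * gosperTerm y n m := by
  induction m with
  | zero =>
    simp only [zero_add, Finset.sum_range_one, gosperTerm_zero_right, Nat.cast_zero]
    ring
  | succ m ih =>
    have hm : (2 * (m + 1) * (2 * m + 3) : K) ≠ 0 :=
      mod_cast (by positivity : 2 * (m + 1) * (2 * m + 3) ≠ 0)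
    rw [Finset.sum_range_succ, ih (by omega), Nat.cast_succ]
    apply mul_left_cancel₀ hm
    -- `y` drops out because `(m + 2)² - 9 (n + 1)² = -(3n + 1 - m) (3n + m + 5)`.
    linear_combination gosperTerm_succ_succ y (Nat.le_of_succ_le_succ h) -
      (3 * n + m + 5) * gosperTerm_succ_right y (Nat.le_of_succ_le_succ h)

theorem sum_gosperTerm_succ (y : K) (n : ℕ) :
    (3 * n + 2) * (3 * n + 4) * ∑ k ∈ Finset.range (n + 2), gosperTerm y (n + 1) k =
      9 * ((n + 1) ^ 2 - y ^ 2) * ∑ k ∈ Finset.range (n + 1), gosperTerm y n k := by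
  have last_eq_zero : gosperTerm y n (n + 1) = 0 := by
    rw [gosperTerm, gosperWeight_eq_zero_of_lt n.lt_succ_self, mul_zero]
  have telescoped := sum_gosperTerm_telescope y (le_refl (n + 1))
  rwa [last_eq_zero, mul_zero, Finset.sum_sub_distrib, ← Finset.mul_sum, ← Finset.mul_sum,
    sub_eq_zero, Finset.sum_range_succ (gosperTerm y n), last_eq_zero, add_zero] at telescoped

theorem sum_gosperTerm (y : K) (n : ℕ) :
    ∑ k ∈ Finset.range (n + 1), gosperTerm y n k =
      (⦅1 + y⦆_n * ⦅1 - y⦆_n) / (⦅2 / 3⦆_n * ⦅4 / 3⦆_n) := by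
  induction n with
  | zero => simp [gosperTerm_zero_right]
  | succ n ih =>
    have hn : ((3 * n + 2) * (3 * n + 4) : K) ≠ 0 :=
      mod_cast (by positivity : (3 * n + 2) * (3 * n + 4) ≠ 0)
    have denominator : (⦅2 / 3⦆_(n + 1) * ⦅4 / 3⦆_(n + 1) : K) =
        (3 * n + 2) * (3 * n + 4) / 9 * (⦅2 / 3⦆_n * ⦅4 / 3⦆_n) := by
      simp only [ascPochhammer_succ_eval]
      ring
    rw [ascPochhammer_eval_one_add_mul_one_sub_succ, denominator, mul_div_mul_comm, ← ih,
      div_div_eq_mul_div, div_mul_eq_mul_div, eq_div_iff hn, mul_comm, sum_gosperTerm_succ,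
      mul_comm 9]

theorem summand_eq_gosperTerm_add_gosperTerm (x : K) (h : 6 * x - 1 ≠ 0) (n k : ℕ) :
    (⦅3 * x⦆_k * ⦅1 - 3 * x⦆_k * ⦅-(n : K)⦆_k) /
        ((k.factorial : K) * ⦅3 / 2⦆_k * ⦅-1 - 3 * (n : K)⦆_k) * (3 / 4) ^ k =
      3 * x / (6 * x - 1) * gosperTerm x n k +
        (3 * x - 1) / (6 * x - 1) * gosperTerm (x - 1 / 3) n k := by
  have contiguous := ascPochhammer_eval_mul_one_sub_contiguous (3 * x) k
  rw [gosperTerm, gosperTerm, gosperCoeff, gosperCoeff, gosperWeight,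
    show 1 + 3 * (x - 1 / 3) = 3 * x by ring, show 1 - 3 * (x - 1 / 3) = 2 - 3 * x by ring,
    div_mul_eq_mul_div (3 * x), div_mul_eq_mul_div (3 * x - 1), ← add_div, eq_div_iff h]
  linear_combination (⦅-(n : K)⦆_k /
    ((k.factorial : K) * ⦅3 / 2⦆_k * ⦅-1 - 3 * (n : K)⦆_k) * (3 / 4) ^ k) * contiguous

theorem gosper_second_ext_ell_one_general (n : ℕ) (x : K) (h6x : 6 * x - 1 ≠ 0) :
    ∑ k ∈ Finset.range (n + 1),
      (⦅3 * x⦆_k * ⦅1 - 3 * x⦆_k * ⦅-(n : K)⦆_k) /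
        ((k.factorial : K) * ⦅3 / 2⦆_k * ⦅-1 - 3 * (n : K)⦆_k) * (3 / 4) ^ k =
      3 * x / (6 * x - 1) * ((⦅1 + x⦆_n * ⦅1 - x⦆_n) / (⦅2 / 3⦆_n * ⦅4 / 3⦆_n)) +
        (3 * x - 1) / (6 * x - 1) *
          ((⦅2 / 3 + x⦆_n * ⦅4 / 3 - x⦆_n) / (⦅2 / 3⦆_n * ⦅4 / 3⦆_n)) := by
  have shifted := sum_gosperTerm (x - 1 / 3) n
  rw [show 1 + (x - 1 / 3) = 2 / 3 + x by ring,
    show 1 - (x - 1 / 3) = 4 / 3 - x by ring] at shifted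
  simp only [summand_eq_gosperTerm_add_gosperTerm x h6x, Finset.sum_add_distrib, ← Finset.mul_sum,
    sum_gosperTerm x, shifted]

end Field

theorem gosper_second_ext_ell_one (n : ℕ) (x : ℂ)
    (h6x : 6*x - 1 ≠ 0) (h3x : 3*x - 1 ≠ 0) :
    ∑ k ∈ Finset.range (n+1),
      (poch (3*x) k * poch (1 - 3*x) k * poch (-(n : ℂ)) k) /
        ((Nat.factorial k : ℂ) * poch (3/2) k * poch (-1 - 3*n : ℂ) k) * (3/4 : ℂ)^k
      = 3*x / (6*x - 1) * ((poch (1 + x) n * poch (1 - x) n) / (poch (2/3) n * poch (4/3) n))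
        + (3*x - 1) / (6*x - 1) *
            ((poch (2/3 + x) n * poch (4/3 - x) n) / (poch (2/3) n * poch (4/3) n)) := by
  simpa only [poch, ascPochhammer_eval_eq_prod_range] using
    gosper_second_ext_ell_one_general n x h6x
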